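/- Let r > 0 and let (ξ_k)_{k ∈ ℕ} ⊆ P⊥ satisfy inf{‖ξ_k + η‖ : η ∈ C⊥} ≤ r for every k. Then there exist a subsequence (ξ_{k_j})_{j ∈ ℕ} and ξ ∈ P⊥ with inf{‖ξ + η‖ : η ∈ C⊥} ≤ r such that sup{∫_{S²} g d(ξ_{k_j} − ξ) : g ∈ C} → 0 as j → ∞. -/

import Mathlib

open MeasureTheory Metric Filter
open scoped RealInnerProductSpace

noncomputable section

/-- The support function of a set `K ⊆ ℝ³`. -/
def suppFn (K : Set (EuclideanSpace ℝ (Fin 3))) (u : EuclideanSpace ℝ (Fin 3)) : ℝ :=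
  sSup ((fun x => ⟪x, u⟫) '' K)

/-- A body of constant width one in `ℝ³`. -/
def IsBodyOfConstantWidthOne (K : Set (EuclideanSpace ℝ (Fin 3))) : Prop :=
  K.Nonempty ∧ IsCompact K ∧ Convex ℝ K ∧
    ∀ u : EuclideanSpace ℝ (Fin 3), suppFn K u + suppFn K (-u) = ‖u‖

/-- The unit sphere `S²` in `ℝ³`, as a type. -/
abbrev Sph : Type := Metric.sphere (0 : EuclideanSpace ℝ (Fin 3)) 1

/-- The integral of a function against a finite signed Borel measure on `S²`. -/
def sint (ξ : SignedMeasure Sph) (g : Sph → ℝ) : ℝ :=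
  (∫ u, g u ∂ξ.toJordanDecomposition.posPart) - ∫ u, g u ∂ξ.toJordanDecomposition.negPart

/-- The total variation norm of a finite signed Borel measure on `S²`. -/
def tvNorm (ξ : SignedMeasure Sph) : ℝ := (ξ.totalVariation Set.univ).toReal

/-- `C`: continuous functions `g` on `S²` such that `g + 1/2` is the sphere restriction of the
support function of a body of constant width one. -/
def Cw : Set (Sph → ℝ) :=
  {g | Continuous g ∧ ∃ K : Set (EuclideanSpace ℝ (Fin 3)), IsBodyOfConstantWidthOne K ∧
    ∀ u : Sph, g u + 1 / 2 = suppFn K u}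

/-- `P⊥`: signed measures annihilating the restrictions of linear functions. -/
def Pperp : Set (SignedMeasure Sph) :=
  {ξ | ∀ a : EuclideanSpace ℝ (Fin 3), sint ξ (fun u => ⟪a, (u : EuclideanSpace ℝ (Fin 3))⟫) = 0}

/-- `C⊥`: signed measures annihilating every element of `C`. -/
def Cperp : Set (SignedMeasure Sph) :=
  {η | ∀ g ∈ Cw, sint η g = 0}

/-!
Adding to `ξ_k` a nearly optimal element of `C⊥` changes neither the integrals over `C` nor the
membership in `P⊥`, so the `ξ_k` may be taken of total variation at most `r + o(1)`; such measures
have a weak* limit point. A body `K` of constant width one lies in the unit ball around any of its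
points `a`, so its support function minus `⟪a, ·⟫` is `1`-Lipschitz with values in `[0, 1]` on the
sphere. By Arzelà–Ascoli, `C` is thus contained in the sum of a norm-compact set and the linear
functions. Weak* convergence of bounded measures is uniform on norm-compact sets, and linear
functions do not contribute because the measures lie in `P⊥`.
-/

open scoped Topology BoundedContinuousFunction NNReal Pointwise

section SignedDifference

variable {X : Type*} [MeasurableSpace X]

lemma isFiniteMeasure_variation (ξ : SignedMeasure X) : IsFiniteMeasure ξ.variation :=
  ξ.totalVariation_eq_variation ▸ inferInstance

/-- The signed measure `p.1 - p.2`. Mathlib puts the weak topology on finite measures only, so weak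
limits of signed measures are taken through such representations. -/
def signedDiff (p : FiniteMeasure X × FiniteMeasure X) : SignedMeasure X :=
  (p.1 : Measure X).toSignedMeasure - (p.2 : Measure X).toSignedMeasure

/-- The Jordan decomposition of a signed measure, as a pair of points of the space of finite
measures. -/
def jordanPair (ξ : SignedMeasure X) : FiniteMeasure X × FiniteMeasure X :=
  (⟨ξ.toJordanDecomposition.posPart, inferInstance⟩,
    ⟨ξ.toJordanDecomposition.negPart, inferInstance⟩)

lemma signedDiff_jordanPair (ξ : SignedMeasure X) : signedDiff (jordanPair ξ) = ξ :=
  ξ.toSignedMeasure_toJordanDecomposition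

lemma mass_add_mass_jordanPair (ξ : SignedMeasure X) :
    ((jordanPair ξ).1.mass + (jordanPair ξ).2.mass : ℝ≥0) = ξ.totalVariation.real Set.univ :=
  (measureReal_add_apply (s := Set.univ)).symm

lemma totalVariation_signedDiff_le (p : FiniteMeasure X × FiniteMeasure X) :
    (signedDiff p).totalVariation.real Set.univ ≤ (p.1.mass + p.2.mass : ℝ≥0) := by
  have h : (signedDiff p).totalVariation ≤ p.1 + p.2 := by
    simpa only [signedDiff, SignedMeasure.totalVariation_eq_variation,
      Measure.variation_toSignedMeasure] using VectorMeasure.variation_sub_le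
        (μ := (p.1 : Measure X).toSignedMeasure) (ν := (p.2 : Measure X).toSignedMeasure)
  exact (ENNReal.toReal_mono (measure_ne_top _ _) (h Set.univ)).trans_eq measureReal_add_apply

end SignedDifference

section Integral

variable {X : Type*} [TopologicalSpace X] [MeasurableSpace X] [OpensMeasurableSpace X]

lemma integrable_signedMeasure (ξ : SignedMeasure X) (f : X →ᵇ ℝ) : ξ.Integrable f :=
  have := isFiniteMeasure_variation ξ
  f.integrable ξ.variation

lemma integral_signedDiff (p : FiniteMeasure X × FiniteMeasure X) (f : X →ᵇ ℝ) :
    ∫ᵛ x, f x ∂<•signedDiff p = ∫ x, f x ∂p.1 - ∫ x, f x ∂p.2 := by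
  rw [signedDiff, VectorMeasure.integral_sub_vectorMeasure (integrable_signedMeasure _ f)
    (integrable_signedMeasure _ f), VectorMeasure.integral_toSignedMeasure,
    VectorMeasure.integral_toSignedMeasure]

lemma continuous_integral_finiteMeasure_prod :
    Continuous fun z : FiniteMeasure X × (X →ᵇ ℝ) => ∫ x, z.2 x ∂z.1 := by
  refine continuous_iff_continuousAt.2 fun ⟨μ, f⟩ => ?_
  have hsplit (z : FiniteMeasure X × (X →ᵇ ℝ)) :
      ∫ x, z.2 x ∂z.1 = ∫ x, (z.2 - f) x ∂z.1 + ∫ x, f x ∂z.1 := by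
    rw [← integral_add ((z.2 - f).integrable _) (f.integrable _)]
    simp
  have hbound (z : FiniteMeasure X × (X →ᵇ ℝ)) :
      ‖∫ x, (z.2 - f) x ∂z.1‖ ≤ z.1.mass * ‖z.2 - f‖ :=
    (z.2 - f).norm_integral_le_mul_norm (z.1 : Measure X)
  have hmass : Tendsto (fun z : FiniteMeasure X × (X →ᵇ ℝ) => (z.1.mass : ℝ) * ‖z.2 - f‖)
      (𝓝 (μ, f)) (𝓝 0) := by
    have : Continuous fun z : FiniteMeasure X × (X →ᵇ ℝ) => (z.1.mass : ℝ) * ‖z.2 - f‖ := by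
      fun_prop
    simpa using this.tendsto (μ, f)
  have hfixed : Tendsto (fun z : FiniteMeasure X × (X →ᵇ ℝ) => ∫ x, f x ∂z.1)
      (𝓝 (μ, f)) (𝓝 (∫ x, f x ∂μ)) :=
    ((FiniteMeasure.continuous_integral_boundedContinuousFunction f).comp continuous_fst).tendsto _
  simpa only [ContinuousAt, hsplit, sub_self, BoundedContinuousFunction.coe_zero, Pi.zero_apply,
    integral_zero, zero_add] using (squeeze_zero_norm hbound hmass).add hfixed

lemma continuous_integral_signedDiff :
    Continuous fun z : (FiniteMeasure X × FiniteMeasure X) × (X →ᵇ ℝ) =>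
      ∫ᵛ x, z.2 x ∂<•signedDiff z.1 := by
  have hfst : Continuous fun z : (FiniteMeasure X × FiniteMeasure X) × (X →ᵇ ℝ) =>
      (z.1.1, z.2) := by fun_prop
  have hsnd : Continuous fun z : (FiniteMeasure X × FiniteMeasure X) × (X →ᵇ ℝ) =>
      (z.1.2, z.2) := by fun_prop
  simp only [integral_signedDiff]
  exact (continuous_integral_finiteMeasure_prod.comp hfst).sub
    (continuous_integral_finiteMeasure_prod.comp hsnd)

lemma continuous_integral_signedMeasure (ξ : SignedMeasure X) :
    Continuous fun f : X →ᵇ ℝ => ∫ᵛ x, f x ∂<•ξ := by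
  simpa only [signedDiff_jordanPair] using
    continuous_integral_signedDiff.comp' (Continuous.prodMk_right (jordanPair ξ))

lemma continuous_sSup_integral_signedDiff_sub {K : Set (X →ᵇ ℝ)} (hK : IsCompact K)
    (ξ : SignedMeasure X) :
    Continuous fun p => sSup ((fun f : X →ᵇ ℝ => ∫ᵛ x, f x ∂<•(signedDiff p - ξ)) '' K) := by
  have hcont : Continuous fun z : (FiniteMeasure X × FiniteMeasure X) × (X →ᵇ ℝ) =>
      ∫ᵛ x, z.2 x ∂<•(signedDiff z.1 - ξ) := by
    have hξ (z : (FiniteMeasure X × FiniteMeasure X) × (X →ᵇ ℝ)) :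
        ∫ᵛ x, z.2 x ∂<•(signedDiff z.1 - ξ) =
          ∫ᵛ x, z.2 x ∂<•signedDiff z.1 - ∫ᵛ x, z.2 x ∂<•ξ :=
      VectorMeasure.integral_sub_vectorMeasure (integrable_signedMeasure _ _)
        (integrable_signedMeasure _ _)
    simp only [hξ]
    exact continuous_integral_signedDiff.sub
      ((continuous_integral_signedMeasure ξ).comp continuous_snd)
  exact hK.continuous_sSup hcont

end Integral

section Annihilator

variable {X : Type*} [TopologicalSpace X] [MeasurableSpace X] {A L : Set (X →ᵇ ℝ)}
  {ξ η : SignedMeasure X}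

/-- The polar `A⊥` of a set `A` of bounded continuous functions: the finite signed measures against
which every element of `A` integrates to zero. -/
def annihilator (A : Set (X →ᵇ ℝ)) : Set (SignedMeasure X) :=
  {ξ | ∀ f ∈ A, ∫ᵛ x, f x ∂<•ξ = 0}

lemma annihilator_anti (h : L ⊆ A) : annihilator A ⊆ annihilator L :=
  fun _ hξ f hf => hξ f (h hf)

lemma zero_mem_annihilator (A : Set (X →ᵇ ℝ)) : 0 ∈ annihilator A :=
  fun _ _ => VectorMeasure.integral_zero_vectorMeasure

lemma exists_mem_annihilator_totalVariation_add_lt {r : ℝ}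
    (h : sInf ((fun η => (ξ + η).totalVariation.real Set.univ) '' annihilator A) < r) :
    ∃ η ∈ annihilator A, (ξ + η).totalVariation.real Set.univ < r := by
  obtain ⟨_, ⟨η, hη, rfl⟩, hlt⟩ :=
    exists_lt_of_csInf_lt (Set.Nonempty.image _ ⟨0, zero_mem_annihilator A⟩) h
  exact ⟨η, hη, hlt⟩

lemma sInf_totalVariation_add_le (ξ : SignedMeasure X) :
    sInf ((fun η => (ξ + η).totalVariation.real Set.univ) '' annihilator A) ≤
      ξ.totalVariation.real Set.univ :=
  csInf_le ⟨0, by rintro _ ⟨η, -, rfl⟩; exact measureReal_nonneg⟩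
    ⟨0, zero_mem_annihilator A, by simp only [add_zero]⟩

variable [OpensMeasurableSpace X]

lemma add_mem_annihilator (hξ : ξ ∈ annihilator A) (hη : η ∈ annihilator A) :
    ξ + η ∈ annihilator A := fun f hf => by
  rw [VectorMeasure.integral_add_vectorMeasure (integrable_signedMeasure _ f)
    (integrable_signedMeasure _ f), hξ f hf, hη f hf, add_zero]

lemma sub_mem_annihilator (hξ : ξ ∈ annihilator A) (hη : η ∈ annihilator A) :
    ξ - η ∈ annihilator A := fun f hf => by
  rw [VectorMeasure.integral_sub_vectorMeasure (integrable_signedMeasure _ f)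
    (integrable_signedMeasure _ f), hξ f hf, hη f hf, sub_zero]

lemma isClosed_setOfPred_signedDiff_mem_annihilator (A : Set (X →ᵇ ℝ)) :
    IsClosed {p : FiniteMeasure X × FiniteMeasure X | signedDiff p ∈ annihilator A} := by
  have hinter : {p : FiniteMeasure X × FiniteMeasure X | signedDiff p ∈ annihilator A} =
      ⋂ f ∈ A, {p | ∫ᵛ x, f x ∂<•signedDiff p = 0} := by
    ext p
    simp [annihilator]
  refine hinter ▸ isClosed_biInter fun f _ => ?_
  have hcont : Continuous fun p : FiniteMeasure X × FiniteMeasure X =>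
      ∫ᵛ x, f x ∂<•signedDiff p := by
    simpa only using continuous_integral_signedDiff.comp' (Continuous.prodMk_left f)
  exact isClosed_eq hcont continuous_const

lemma sSup_integral_mem_Icc_of_subset_add {K : Set (X →ᵇ ℝ)} (hK : IsCompact K)
    (hL : L.Nonempty) (hLA : L ⊆ A) (hA : A ⊆ K + L) (hξ : ξ ∈ annihilator L) :
    sSup ((fun f : X →ᵇ ℝ => ∫ᵛ x, f x ∂<•ξ) '' A) ∈
      Set.Icc 0 (sSup ((fun f : X →ᵇ ℝ => ∫ᵛ x, f x ∂<•ξ) '' K)) := by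
  obtain ⟨l, hl⟩ := hL
  have hsub : (fun f : X →ᵇ ℝ => ∫ᵛ x, f x ∂<•ξ) '' A ⊆ (fun f => ∫ᵛ x, f x ∂<•ξ) '' K := by
    rintro _ ⟨_, hg, rfl⟩
    obtain ⟨f, hf, l', hl', rfl⟩ := hA hg
    refine ⟨f, hf, ?_⟩
    simp only [BoundedContinuousFunction.coe_add]
    rw [VectorMeasure.integral_add (integrable_signedMeasure ξ f) (integrable_signedMeasure ξ l'),
      hξ l' hl', add_zero]
  have hbdd : BddAbove ((fun f : X →ᵇ ℝ => ∫ᵛ x, f x ∂<•ξ) '' K) :=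
    (hK.image (continuous_integral_signedMeasure ξ)).bddAbove
  exact ⟨le_csSup (hbdd.mono hsub) ⟨l, hLA hl, hξ l hl⟩,
    csSup_le_csSup hbdd ⟨_, l, hLA hl, rfl⟩ hsub⟩

end Annihilator

section Compactness

variable {X : Type*} [TopologicalSpace X] [CompactSpace X] [T2Space X] [MeasurableSpace X]
  [BorelSpace X] {A K L : Set (X →ᵇ ℝ)} {r : ℝ}

lemma isCompact_setOfPred_mass_add_mass_le (C : ℝ≥0) :
    IsCompact {p : FiniteMeasure X × FiniteMeasure X | p.1.mass + p.2.mass ≤ C} := by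
  have hcomp := isCompact_setOfPred_finiteMeasure_le_of_compactSpace X C
  exact (hcomp.prod hcomp).of_isClosed_subset (isClosed_le (by fun_prop) continuous_const)
    fun p (hp : p.1.mass + p.2.mass ≤ C) => ⟨le_self_add.trans hp, le_add_self.trans hp⟩

lemma exists_subseq_tendsto_sSup_integral (hK : IsCompact K) {ζ : ℕ → SignedMeasure X}
    (hζ : ∀ k, ζ k ∈ annihilator L) {R : ℕ → ℝ} (hR : Tendsto R atTop (𝓝 r))
    (hζR : ∀ k, (ζ k).totalVariation.real Set.univ ≤ R k) :
    ∃ (φ : ℕ → ℕ) (ξ : SignedMeasure X), StrictMono φ ∧ ξ ∈ annihilator L ∧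
      ξ.totalVariation.real Set.univ ≤ r ∧
      Tendsto (fun j => sSup ((fun f : X →ᵇ ℝ => ∫ᵛ x, f x ∂<•(ζ (φ j) - ξ)) '' K))
        atTop (𝓝 0) := by
  set p := fun k => jordanPair (ζ k)
  have hp (k : ℕ) : signedDiff (p k) = ζ k := signedDiff_jordanPair (ζ k)
  have hpL (k : ℕ) : signedDiff (p k) ∈ annihilator L := (hp k).symm ▸ hζ k
  have hmass (k : ℕ) : ((p k).1.mass + (p k).2.mass : ℝ≥0) ≤ R k :=
    (mass_add_mass_jordanPair (ζ k)).trans_le (hζR k)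
  obtain ⟨C, hC⟩ := hR.bddAbove_range
  have hpC (k : ℕ) : (p k).1.mass + (p k).2.mass ≤ C.toNNReal :=
    NNReal.le_toNNReal_of_coe_le <| (hmass k).trans <| hC ⟨k, rfl⟩
  obtain ⟨q, -, hq⟩ := (isCompact_setOfPred_mass_add_mass_le C.toNNReal).exists_mapClusterPt
    (tendsto_principal.2 (.of_forall hpC) : Tendsto p atTop _)
  have hqL : signedDiff q ∈ annihilator L :=
    (isClosed_setOfPred_signedDiff_mem_annihilator L).mem_of_mapClusterPt hq (.of_forall hpL)
  have hcont : Continuous fun p' : FiniteMeasure X × FiniteMeasure X =>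
      (sSup ((fun f : X →ᵇ ℝ => ∫ᵛ x, f x ∂<•(signedDiff p' - signedDiff q)) '' K),
        ((p'.1.mass + p'.2.mass : ℝ≥0) : ℝ)) :=
    (continuous_sSup_integral_signedDiff_sub hK _).prodMk (by fun_prop)
  -- The weak topology is not known to be first countable, so the subsequence is extracted from the
  -- values of this real-valued pair.
  obtain ⟨φ, hφ, hlim⟩ := (hq.continuousAt_comp hcont.continuousAt).tendsto_subseq
  refine ⟨φ, signedDiff q, hφ, hqL, (totalVariation_signedDiff_le q).trans ?_, ?_⟩
  · exact le_of_tendsto_of_tendsto' hlim.snd_nhds (hR.comp hφ.tendsto_atTop)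
      fun j => hmass (φ j)
  · have hzero :
        sSup ((fun f : X →ᵇ ℝ => ∫ᵛ x, f x ∂<•(signedDiff q - signedDiff q)) '' K) = 0 := by
      rw [sub_self]
      simp only [VectorMeasure.integral_zero_vectorMeasure]
      rcases K.eq_empty_or_nonempty with rfl | hne
      · simp
      · simp [hne.image_const]
    simpa only [hzero, Function.comp_def, hp] using hlim.fst_nhds

theorem compactness_in_chiStar_metric_general (hK : IsCompact K) (hL : L.Nonempty) (hLA : L ⊆ A)
    (hA : A ⊆ K + L) {ξ : ℕ → SignedMeasure X} (hmem : ∀ k, ξ k ∈ annihilator L)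
    (hbd : ∀ k, sInf ((fun η => (ξ k + η).totalVariation.real Set.univ) '' annihilator A) ≤ r) :
    ∃ (k : ℕ → ℕ) (ξ' : SignedMeasure X), StrictMono k ∧ ξ' ∈ annihilator L ∧
      sInf ((fun η => (ξ' + η).totalVariation.real Set.univ) '' annihilator A) ≤ r ∧
      Tendsto (fun j => sSup ((fun g : X →ᵇ ℝ => ∫ᵛ x, g x ∂<•(ξ (k j) - ξ')) '' A))
        atTop (𝓝 0) := by
  choose η hη hlt using fun k : ℕ => exists_mem_annihilator_totalVariation_add_lt
    ((hbd k).trans_lt (lt_add_of_pos_right r (Nat.one_div_pos_of_nat (n := k))))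
  have hζ (k : ℕ) : ξ k + η k ∈ annihilator L :=
    add_mem_annihilator (hmem k) (annihilator_anti hLA (hη k))
  have hR : Tendsto (fun k : ℕ => r + 1 / ((k : ℝ) + 1)) atTop (𝓝 r) := by
    simpa using tendsto_one_div_add_atTop_nhds_zero_nat.const_add r
  obtain ⟨k, ξ', hk, hξ', hξ'r, hlim⟩ :=
    exists_subseq_tendsto_sSup_integral hK hζ hR fun k => (hlt k).le
  refine ⟨k, ξ', hk, hξ', (sInf_totalVariation_add_le ξ').trans hξ'r, ?_⟩
  have hcongr (j : ℕ) : sSup ((fun g : X →ᵇ ℝ => ∫ᵛ x, g x ∂<•(ξ (k j) - ξ')) '' A) =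
      sSup ((fun g : X →ᵇ ℝ => ∫ᵛ x, g x ∂<•(ξ (k j) + η (k j) - ξ')) '' A) := by
    refine congrArg sSup (Set.image_congr fun g hg => ?_)
    rw [add_sub_right_comm, VectorMeasure.integral_add_vectorMeasure (integrable_signedMeasure _ g)
      (integrable_signedMeasure _ g), hη (k j) g hg, add_zero]
  have hIcc (j : ℕ) := sSup_integral_mem_Icc_of_subset_add hK hL hLA hA
    (sub_mem_annihilator (hζ (k j)) hξ')
  simp only [hcongr]
  exact squeeze_zero (fun j => (hIcc j).1) (fun j => (hIcc j).2) hlim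

end Compactness

lemma isCompact_setOfPred_lipschitzWith_mem {X Y : Type*} [PseudoMetricSpace X] [CompactSpace X]
    [MetricSpace Y] (C : ℝ≥0) {s : Set Y} (hs : IsCompact s) :
    IsCompact {f : X →ᵇ Y | LipschitzWith C f ∧ ∀ x, f x ∈ s} := by
  refine BoundedContinuousFunction.arzela_ascoli₂ s hs _ ?_ (fun f x hf => hf.2 x)
    (LipschitzWith.uniformEquicontinuous _ C fun f => f.2.1).equicontinuous
  have hclosed : IsClosed {f : X → Y | LipschitzWith C f ∧ ∀ x, f x ∈ s} := by
    have hrange : IsClosed (Set.univ.pi fun _ : X => s) :=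
      isClosed_set_pi fun _ _ => hs.isClosed
    simpa [Set.pi, Set.ofPred_and] using (isClosed_setOfPred_lipschitzWith C).inter hrange
  exact hclosed.preimage BoundedContinuousFunction.continuous_coe

section ConstantWidth

variable {K : Set (EuclideanSpace ℝ (Fin 3))} {a x : EuclideanSpace ℝ (Fin 3)}

lemma inner_le_suppFn (hK : Bornology.IsBounded K) (hx : x ∈ K) (u : EuclideanSpace ℝ (Fin 3)) :
    ⟪x, u⟫ ≤ suppFn K u :=
  le_csSup ((innerSLFlip ℝ u).lipschitz.isBounded_image hK).bddAbove ⟨x, hx, rfl⟩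

lemma suppFn_sub_inner_le (hne : K.Nonempty) {R : ℝ} (hKa : K ⊆ closedBall a R)
    (u v : EuclideanSpace ℝ (Fin 3)) :
    suppFn K u - ⟪a, u⟫ ≤ suppFn K v - ⟪a, v⟫ + R * ‖u - v‖ := by
  suffices suppFn K u ≤ ⟪a, u⟫ + (suppFn K v - ⟪a, v⟫ + R * ‖u - v‖) by linarith
  refine csSup_le (hne.image _) ?_
  rintro _ ⟨x, hx, rfl⟩
  have hxa : ‖x - a‖ ≤ R := mem_closedBall_iff_norm.1 (hKa hx)
  have hdiff : ⟪x - a, u - v⟫ ≤ R * ‖u - v‖ :=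
    (real_inner_le_norm _ _).trans (by gcongr)
  have hv : ⟪x, v⟫ ≤ suppFn K v := inner_le_suppFn (isBounded_closedBall.subset hKa) hx v
  simp only [inner_sub_left, inner_sub_right] at hdiff ⊢
  linarith

lemma suppFn_closedBall {ρ : ℝ} (hρ : 0 ≤ ρ) (a u : EuclideanSpace ℝ (Fin 3)) :
    suppFn (closedBall a ρ) u = ⟪a, u⟫ + ρ * ‖u‖ := by
  refine IsGreatest.csSup_eq ⟨⟨a + (ρ / ‖u‖) • u, ?_, ?_⟩, ?_⟩
  · rw [mem_closedBall_iff_norm, add_sub_cancel_left, norm_smul,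
      Real.norm_of_nonneg (by positivity), div_mul_eq_mul_div]
    exact div_le_of_le_mul₀ (norm_nonneg u) hρ le_rfl
  · rcases eq_or_ne u 0 with rfl | hu
    · simp
    · have := norm_ne_zero_iff.2 hu
      simp only [inner_add_left, real_inner_smul_left, real_inner_self_eq_norm_sq]
      field_simp
  · rintro _ ⟨x, hx, rfl⟩
    have h : ⟪x - a, u⟫ ≤ ρ * ‖u‖ := (real_inner_le_norm _ _).trans
      (mul_le_mul_of_nonneg_right (mem_closedBall_iff_norm.1 hx) (norm_nonneg u))
    rw [inner_sub_left] at h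
    simp only
    linarith

lemma isBodyOfConstantWidthOne_closedBall (a : EuclideanSpace ℝ (Fin 3)) :
    IsBodyOfConstantWidthOne (closedBall a (1 / 2)) := by
  refine ⟨nonempty_closedBall.2 (by norm_num), isCompact_closedBall _ _, convex_closedBall _ _,
    fun u => ?_⟩
  rw [suppFn_closedBall (by norm_num), suppFn_closedBall (by norm_num), inner_neg_right, norm_neg]
  ring

namespace IsBodyOfConstantWidthOne

lemma suppFn_sub_inner_mem_Icc (hK : IsBodyOfConstantWidthOne K) (ha : a ∈ K)
    (u : EuclideanSpace ℝ (Fin 3)) : suppFn K u - ⟪a, u⟫ ∈ Set.Icc 0 ‖u‖ := by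
  obtain ⟨-, hcomp, -, hwidth⟩ := hK
  have hpos : ⟪a, u⟫ ≤ suppFn K u := inner_le_suppFn hcomp.isBounded ha u
  have hneg : -⟪a, u⟫ ≤ suppFn K (-u) := by
    simpa only [inner_neg_right] using inner_le_suppFn hcomp.isBounded ha (-u)
  constructor <;> linarith [hwidth u]

lemma subset_closedBall (hK : IsBodyOfConstantWidthOne K) (ha : a ∈ K) : K ⊆ closedBall a 1 := by
  intro x hx
  have hinner : ‖x - a‖ ^ 2 ≤ ‖x - a‖ := by
    rw [← real_inner_self_eq_norm_sq, inner_sub_left]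
    linarith [inner_le_suppFn hK.2.1.isBounded hx (x - a),
      (hK.suppFn_sub_inner_mem_Icc ha (x - a)).2]
  rw [mem_closedBall_iff_norm]
  nlinarith [norm_nonneg (x - a)]

end IsBodyOfConstantWidthOne

end ConstantWidth

section Sphere

/-- The restriction to the sphere of the linear function `⟪a, ·⟫`. -/
def linearOnSphere (a : EuclideanSpace ℝ (Fin 3)) : Sph →ᵇ ℝ :=
  .mkOfCompact ⟨fun u => ⟪a, (u : EuclideanSpace ℝ (Fin 3))⟫, by fun_prop⟩

lemma linearOnSphere_mem_Cw (a : EuclideanSpace ℝ (Fin 3)) : ⇑(linearOnSphere a) ∈ Cw := by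
  refine ⟨(linearOnSphere a).continuous, closedBall a (1 / 2),
    isBodyOfConstantWidthOne_closedBall a, fun u => ?_⟩
  rw [suppFn_closedBall (by norm_num), norm_eq_of_mem_sphere, mul_one]
  rfl

lemma exists_sub_linearOnSphere_mem {g : Sph →ᵇ ℝ} (hg : ⇑g ∈ Cw) :
    ∃ a, LipschitzWith 1 (g - linearOnSphere a) ∧
      ∀ u, (g - linearOnSphere a) u ∈ Set.Icc (-1 / 2) (1 / 2 : ℝ) := by
  obtain ⟨-, K, hK, hgK⟩ := hg
  obtain ⟨a, ha⟩ := hK.1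
  have hval (u : Sph) :
      (g - linearOnSphere a) u = suppFn K u - ⟪a, (u : EuclideanSpace ℝ (Fin 3))⟫ - 1 / 2 := by
    rw [← hgK]
    simp only [linearOnSphere, BoundedContinuousFunction.sub_apply,
      BoundedContinuousFunction.mkOfCompact_apply, ContinuousMap.coe_mk]
    ring
  refine ⟨a, LipschitzWith.of_le_add fun u v => ?_, fun u => ?_⟩
  · have h := suppFn_sub_inner_le hK.1 (hK.subset_closedBall ha) u v
    rw [hval, hval, Subtype.dist_eq, dist_eq_norm]
    linarith
  · have h := hK.suppFn_sub_inner_mem_Icc ha u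
    rw [norm_eq_of_mem_sphere] at h
    rw [hval]
    constructor <;> linarith [h.1, h.2]

lemma Cw_subset_add_range_linearOnSphere :
    {g : Sph →ᵇ ℝ | ⇑g ∈ Cw} ⊆
      {f : Sph →ᵇ ℝ | LipschitzWith 1 f ∧ ∀ u, f u ∈ Set.Icc (-1 / 2) (1 / 2)} +
        Set.range linearOnSphere := by
  intro g hg
  obtain ⟨a, ha⟩ := exists_sub_linearOnSphere_mem hg
  exact ⟨g - linearOnSphere a, ha, linearOnSphere a, ⟨a, rfl⟩, sub_add_cancel _ _⟩

lemma sint_eq_integral (ξ : SignedMeasure Sph) (f : Sph →ᵇ ℝ) : sint ξ f = ∫ᵛ u, f u ∂<•ξ := by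
  conv_rhs => rw [← signedDiff_jordanPair ξ]
  exact (integral_signedDiff (jordanPair ξ) f).symm

lemma sint_image_Cw (ξ : SignedMeasure Sph) :
    (fun g => sint ξ g) '' Cw = (fun g : Sph →ᵇ ℝ => ∫ᵛ u, g u ∂<•ξ) '' {g | ⇑g ∈ Cw} := by
  ext t
  constructor
  · rintro ⟨g, hg, rfl⟩
    exact ⟨.mkOfCompact ⟨g, hg.1⟩, hg, (sint_eq_integral ξ _).symm⟩
  · rintro ⟨g, hg, rfl⟩
    exact ⟨g, hg, sint_eq_integral ξ g⟩

lemma Pperp_eq_annihilator : Pperp = annihilator (Set.range linearOnSphere) := by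
  ext ξ
  simp only [annihilator, ← sint_eq_integral, Set.mem_ofPred_eq, Set.forall_mem_range]
  rfl

lemma Cperp_eq_annihilator : Cperp = annihilator {g : Sph →ᵇ ℝ | ⇑g ∈ Cw} := by
  ext ξ
  simp only [annihilator, ← sint_eq_integral]
  exact ⟨fun h g hg => h g hg, fun h g hg => h (.mkOfCompact ⟨g, hg.1⟩) hg⟩

end Sphere

theorem compactness_in_chiStar_metric (r : ℝ) (hr : 0 < r)
    (ξ : ℕ → SignedMeasure Sph) (hmem : ∀ k, ξ k ∈ Pperp)
    (hbd : ∀ k, sInf ((fun η => tvNorm (ξ k + η)) '' Cperp) ≤ r) :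
    ∃ (k : ℕ → ℕ) (ξ' : SignedMeasure Sph), StrictMono k ∧ ξ' ∈ Pperp ∧
      sInf ((fun η => tvNorm (ξ' + η)) '' Cperp) ≤ r ∧
      Filter.Tendsto (fun j => sSup ((fun g => sint (ξ (k j) - ξ') g) '' Cw))
        Filter.atTop (nhds 0) := by
  simp only [Pperp_eq_annihilator, Cperp_eq_annihilator, sint_image_Cw] at hmem hbd ⊢
  exact compactness_in_chiStar_metric_general
    (isCompact_setOfPred_lipschitzWith_mem 1 isCompact_Icc) (Set.range_nonempty linearOnSphere)
    (Set.range_subset_iff.2 linearOnSphere_mem_Cw) Cw_subset_add_range_linearOnSphere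
    hmem hbd
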